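/- Let λ be a Dyck path of order n, σ ∈ L(P_λ), and T = DTR(λ,σ); let ℓ_i and r_i be the positions of the left and right endpoints of the chord labeled i in the natural labeling corresponding to σ. Then area(T) = Σ_{i ∈ DES(ℓ)} (ℓ_i − r_{i+1}) and tiles(T) = Σ_{i ∈ DES(ℓ)} (ℓ_i − r_{i+1} − 2·#{j > i+1 : r_{i+1} < ℓ_j < ℓ_i}), where ℓ denotes the word ℓ_1⋯ℓ_n and DES(ℓ) = {i < n : ℓ_i > ℓ_{i+1}}. -/

import Mathlib

open Finset

noncomputable section

/-- A Dyck path of order `n`: a word of `2n` steps (`true` = up-step `(+1,+1)`,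
`false` = down-step `(+1,-1)`) from `(-n,0)` to `(n,0)` staying weakly above the x-axis. -/
structure DyckPath (n : ℕ) where
  step : Fin (2 * n) → Bool
  balanced : (Finset.univ.filter fun i => step i = true).card = n
  nonneg : ∀ k : ℕ, k ≤ 2 * n →
    (Finset.univ.filter fun i : Fin (2 * n) => (i : ℕ) < k ∧ step i = false).card ≤
      (Finset.univ.filter fun i : Fin (2 * n) => (i : ℕ) < k ∧ step i = true).card

namespace DyckPath

/-- Height of the path above column `x` (columns run from `-n` to `n`). -/
def ht {n : ℕ} (P : DyckPath n) (x : ℤ) : ℤ :=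
  ((Finset.univ.filter fun i : Fin (2 * n) => ((i : ℕ) : ℤ) < x + n ∧ P.step i = true).card : ℤ) -
    ((Finset.univ.filter fun i : Fin (2 * n) => ((i : ℕ) : ℤ) < x + n ∧ P.step i = false).card : ℤ)

/-- Height of the path at lattice point number `k`, `0 ≤ k ≤ 2n`
(point `k` lies at column `k - n`). -/
def pt {n : ℕ} (P : DyckPath n) (k : ℕ) : ℤ := P.ht ((k : ℤ) - n)

end DyckPath

/-- `IsChord P p q`: the up-step at (0-indexed) position `p` matches the down-step at
position `q`, forming a chord of `P`. -/
def IsChord {n : ℕ} (P : DyckPath n) (p q : ℕ) : Prop :=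
  p < q ∧ q < 2 * n ∧
    (∃ hp : p < 2 * n, P.step ⟨p, hp⟩ = true) ∧
    (∃ hq : q < 2 * n, P.step ⟨q, hq⟩ = false) ∧
    P.pt (q + 1) = P.pt p ∧
    ∀ m : ℕ, p < m → m ≤ q → P.pt p < P.pt m

/-- A natural labeling of the chord poset of `P`: the chord labeled `i` has its up-step at
(0-indexed) position `l i` and matching down-step at position `r i`; distinct labels name
distinct chords; and if one chord is nested inside another it receives a larger label. -/
structure ChordLabeling {n : ℕ} (P : DyckPath n) where
  l : Fin n → ℕ
  r : Fin n → ℕ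
  chord : ∀ i, IsChord P (l i) (r i)
  inj : Function.Injective l
  natural : ∀ i j : Fin n, l j < l i → r i < r j → j < i

/-- The length of the chord labeled `i`: the number of up steps of `P` between and
including its two endpoints. -/
def chordLen {n : ℕ} {P : DyckPath n} (C : ChordLabeling P) (i : Fin n) : ℕ :=
  (Finset.univ.filter fun m : Fin (2 * n) =>
    C.l i ≤ (m : ℕ) ∧ (m : ℕ) ≤ C.r i ∧ P.step m = true).card

/-- The growth sequence `p_1, …, p_n` associated with a natural chord labeling:
`p i = #{j<i : l j < l i} + #{j<i : r j < l i}`. -/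
def seqOf {n : ℕ} {P : DyckPath n} (C : ChordLabeling P) (i : Fin n) : ℕ :=
  (Finset.univ.filter fun j : Fin n => j < i ∧ C.l j < C.l i).card +
    (Finset.univ.filter fun j : Fin n => j < i ∧ C.r j < C.l i).card

/-- `σ` is the standardization of the word `w` (with distinct letters). -/
def IsStandardization {n : ℕ} (w : Fin n → ℕ) (σ : Equiv.Perm (Fin n)) : Prop :=
  ∀ i j : Fin n, σ i < σ j ↔ w i < w j

/-- `σ ∈ 𝓛(P_λ)`: σ is `L₀ ∘ L⁻¹` for some natural labeling `L` of the chord poset,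
equivalently the standardization of the word of left endpoints of a natural labeling. -/
def LinExt {n : ℕ} (P : DyckPath n) (σ : Equiv.Perm (Fin n)) : Prop :=
  ∃ C : ChordLabeling P, IsStandardization C.l σ

/-- Successor index in `Fin n` (used only under the guard `i+1 < n`). -/
def nextIdx {n : ℕ} (i : Fin n) : Fin n := ⟨((i : ℕ) + 1) % n, Nat.mod_lt _ i.pos⟩

/-- Descent set of a word: positions `i` with `i+1 < n` and `w i > w (i+1)`. -/
def descentFinset {n : ℕ} (w : Fin n → ℕ) : Finset (Fin n) :=
  Finset.univ.filter fun i => (i : ℕ) + 1 < n ∧ w (nextIdx i) < w i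

/-- Number of inversions of a word. -/
def wordInv {n : ℕ} (w : Fin n → ℕ) : ℕ :=
  (Finset.univ.filter fun p : Fin n × Fin n => p.1 < p.2 ∧ w p.2 < w p.1).card

/-- The word of values of a permutation. -/
def permWord {n : ℕ} (σ : Equiv.Perm (Fin n)) : Fin n → ℕ := fun i => (σ i : ℕ)

/-- inv(σ). -/
def permInv {n : ℕ} (σ : Equiv.Perm (Fin n)) : ℕ := wordInv (permWord σ)

/-- des(σ). -/
def permDes {n : ℕ} (σ : Equiv.Perm (Fin n)) : ℕ := (descentFinset (permWord σ)).card

/-- `REM_i(w) = {k > i : w i > w k > w (i+1)}`, the right embraced numbers. -/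
def remSet {n : ℕ} (w : Fin n → ℕ) (i : Fin n) : Finset (Fin n) :=
  Finset.univ.filter fun k => i < k ∧ w (nextIdx i) < w k ∧ w k < w i

/-- desdif(σ) = Σ_{i ∈ DES σ} (σ i − σ (i+1)). -/
def desdif {n : ℕ} (σ : Equiv.Perm (Fin n)) : ℕ :=
  ∑ i ∈ descentFinset (permWord σ), (permWord σ i - permWord σ (nextIdx i))

/-- res(σ) = Σ_{i ∈ DES σ} #{k < i : σ i > σ k > σ (i+1)}. -/
def resStat {n : ℕ} (σ : Equiv.Perm (Fin n)) : ℕ :=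
  ∑ i ∈ descentFinset (permWord σ),
    (Finset.univ.filter fun k : Fin n =>
      k < i ∧ permWord σ (nextIdx i) < permWord σ k ∧ permWord σ k < permWord σ i).card

/-- The Mahonian statistic mad(σ) = desdif(σ) + res(σ). -/
def mad {n : ℕ} (σ : Equiv.Perm (Fin n)) : ℕ := desdif σ + resStat σ

/-- σ avoids the pattern 231. -/
def Avoids231 {n : ℕ} (σ : Equiv.Perm (Fin n)) : Prop :=
  ¬∃ i j k : Fin n, i < j ∧ j < k ∧ σ k < σ i ∧ σ i < σ j

/-- The boxes of the skew shape `lam/mu` (with `mu` weakly above `lam`), each box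
recorded by its bottom corner (a lattice point `(x, z)` with `z ≡ x + n (mod 2)`). -/
def skewCells {n : ℕ} (lam mu : DyckPath n) : Finset (ℤ × ℤ) :=
  ((Finset.Icc (-(n : ℤ)) n) ×ˢ (Finset.Icc (0 : ℤ) n)).filter fun c =>
    lam.ht c.1 ≤ c.2 ∧ c.2 + 2 ≤ mu.ht c.1 ∧ (c.2 - c.1 - n) % 2 = 0

/-- A Dyck tile, recorded by the set of bottom corners of its boxes: these form
a Dyck-path shape, i.e. a ±1-step lattice path whose two ends are lowest. -/
def IsDyckTile (t : Finset (ℤ × ℤ)) : Prop :=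
  ∃ (a b : ℤ) (f : ℤ → ℤ), a ≤ b ∧
    (∀ x : ℤ, a ≤ x → x < b → f (x + 1) = f x + 1 ∨ f (x + 1) = f x - 1) ∧
    f b = f a ∧ (∀ x : ℤ, a ≤ x → x ≤ b → f a ≤ f x) ∧
    t = (Finset.Icc a b).image fun x => (x, f x)

/-- A Dyck tiling of order `n`: a tiling of the skew shape between two Dyck paths of
order `n` by Dyck tiles. -/
structure DyckTiling (n : ℕ) where
  lower : DyckPath n
  upper : DyckPath n
  below : ∀ x : ℤ, lower.ht x ≤ upper.ht x
  tiles : Finset (Finset (ℤ × ℤ))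
  isDyck : ∀ t ∈ tiles, IsDyckTile t
  disj : ∀ t ∈ tiles, ∀ u ∈ tiles, t ≠ u → Disjoint t u
  cover : tiles.biUnion id = skewCells lower upper

namespace DyckTiling

/-- Number of boxes of the skew shape. -/
def area {n : ℕ} (T : DyckTiling n) : ℕ := (skewCells T.lower T.upper).card

/-- Number of tiles. -/
def numTiles {n : ℕ} (T : DyckTiling n) : ℕ := T.tiles.card

/-- art(T) = (area(T) + tiles(T)) / 2. -/
def art {n : ℕ} (T : DyckTiling n) : ℕ := (T.area + T.numTiles) / 2

/-- dis(T): the number of step positions where the lower path steps down while the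
upper path steps up. -/
def dis {n : ℕ} (T : DyckTiling n) : ℕ :=
  (Finset.univ.filter fun i : Fin (2 * n) =>
    T.lower.step i = false ∧ T.upper.step i = true).card

/-- Cover-inclusiveness: whenever a tile has a box strictly above a box of another tile,
its horizontal extent is contained in that of the other tile. -/
def CoverInclusive {n : ℕ} (T : DyckTiling n) : Prop :=
  ∀ t ∈ T.tiles, ∀ u ∈ T.tiles,
    (∃ p ∈ t, ∃ q ∈ u, (p : ℤ × ℤ).1 = (q : ℤ × ℤ).1 ∧ (q : ℤ × ℤ).2 < (p : ℤ × ℤ).2) →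
    ∀ p ∈ t, ∃ y : ℤ, ((p : ℤ × ℤ).1, y) ∈ u

end DyckTiling

/-- Height function of the spread at column `s` of a Dyck path. -/
def spreadHt {n : ℕ} (P : DyckPath n) (s x : ℤ) : ℤ :=
  if x < s then P.ht (x + 1) else if x = s then P.ht s + 1 else P.ht (x - 1)

/-- Spread of a tile at column `s`: points left of `s` move left, points right of `s`
move right, and a point at column `s` is duplicated upward. -/
def spreadTile (s : ℤ) (t : Finset (ℤ × ℤ)) : Finset (ℤ × ℤ) :=
  ((t.filter fun p => p.1 ≤ s).image fun p => (p.1 - 1, p.2)) ∪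
    ((t.filter fun p => p.1 = s).image fun p => (p.1, p.2 + 1)) ∪
    ((t.filter fun p => s ≤ p.1).image fun p => (p.1 + 1, p.2))

/-- Spread of a set of tiles at column `s`. -/
def spreadTiles (s : ℤ) (ts : Finset (Finset (ℤ × ℤ))) : Finset (Finset (ℤ × ℤ)) :=
  ts.image (spreadTile s)

/-- Column `c` is eligible for a tiling with upper-boundary height function `h` and
tile set `ts`: the upper boundary has an up step ending at column `c`, and its point at
column `c` is not the top corner of a one-box tile. -/
def EligibleCol (h : ℤ → ℤ) (ts : Finset (Finset (ℤ × ℤ))) (c : ℤ) : Prop :=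
  h c = h (c - 1) + 1 ∧ ({(c, h c - 2)} : Finset (ℤ × ℤ)) ∉ ts

/-- `T'` is the result of the strip-grow map applied to `(T, s)`: spread `T` at `s` and
add a one-box tile on each up step of the (spread) upper boundary starting at a column
`≥ s` (i.e. strictly to the right of column `s`). -/
def StripGrowRel {n : ℕ} (T : DyckTiling n) (s : ℤ) (T' : DyckTiling (n + 1)) : Prop :=
  (∀ x : ℤ, T'.lower.ht x = spreadHt T.lower s x) ∧
  (∀ x : ℤ, T'.upper.ht x =
    if s ≤ x ∧ spreadHt T.upper s (x + 1) = spreadHt T.upper s x + 1 then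
      spreadHt T.upper s x + 2
    else spreadHt T.upper s x) ∧
  T'.tiles = spreadTiles s T.tiles ∪
    ((Finset.Icc s (n : ℤ)).filter fun x =>
        spreadHt T.upper s (x + 1) = spreadHt T.upper s x + 1).image
      (fun x => ({(x, spreadHt T.upper s x)} : Finset (ℤ × ℤ)))

/-- `T'` is the result of the ribbon-grow map applied to `(T, s)`: spread `T` at `s`,
and if the special column `Q` of the spread tiling is strictly right of `s`, add a
ribbon of one-box tiles at all columns strictly between `s` and `Q`. -/
def RibbonGrowRel {n : ℕ} (T : DyckTiling n) (s : ℤ) (T' : DyckTiling (n + 1)) : Prop :=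
  (∀ x : ℤ, T'.lower.ht x = spreadHt T.lower s x) ∧
  ∃ Q : ℤ,
    EligibleCol (spreadHt T.upper s) (spreadTiles s T.tiles) Q ∧
    (∀ c : ℤ, EligibleCol (spreadHt T.upper s) (spreadTiles s T.tiles) c → c ≤ Q) ∧
    (∀ x : ℤ, T'.upper.ht x =
      if s < x ∧ x < Q then spreadHt T.upper s x + 2 else spreadHt T.upper s x) ∧
    T'.tiles = spreadTiles s T.tiles ∪
      (Finset.Ioo s Q).image (fun x => ({(x, spreadHt T.upper s x)} : Finset (ℤ × ℤ)))

/-- `s` is the special column of `T`: its rightmost eligible column. -/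
def SpecialCol {n : ℕ} (T : DyckTiling n) (s : ℤ) : Prop :=
  EligibleCol T.upper.ht T.tiles s ∧ ∀ c : ℤ, EligibleCol T.upper.ht T.tiles c → c ≤ s

/-- In the strip-shrink map applied to `T'` with special column `s`, a one-box tile is
removed at column `x`: `x` is right of `s` and there is a one-box tile there that is
part of an up step of the upper boundary. -/
def StripRemovedAt {n : ℕ} (T' : DyckTiling n) (s x : ℤ) : Prop :=
  s < x ∧ T'.upper.ht x = T'.upper.ht (x - 1) + 1 ∧
    ({(x, T'.upper.ht x - 2)} : Finset (ℤ × ℤ)) ∈ T'.tiles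

instance {n : ℕ} (T' : DyckTiling n) (s x : ℤ) : Decidable (StripRemovedAt T' s x) := by
  unfold StripRemovedAt; infer_instance

/-- `(T, s)` is the result of the strip-shrink map applied to `T'`: `s` is the special
column of `T'`; all one-box tiles right of `s` lying on up steps of the upper boundary
are removed; and the result is the spread of `T` at `s`. -/
def StripShrinkRel {n : ℕ} (T' : DyckTiling (n + 1)) (T : DyckTiling n) (s : ℤ) : Prop :=
  SpecialCol T' s ∧
  (∀ x : ℤ, spreadHt T.lower s x = T'.lower.ht x) ∧
  (∀ x : ℤ, spreadHt T.upper s x =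
    if StripRemovedAt T' s x then T'.upper.ht x - 2 else T'.upper.ht x) ∧
  spreadTiles s T.tiles =
    T'.tiles \ (((Finset.Ioc s ((n : ℤ) + 1)).filter fun x => StripRemovedAt T' s x).image
      fun x => ({(x, T'.upper.ht x - 2)} : Finset (ℤ × ℤ)))

/-- `(T, s)` is the result of the ribbon-shrink map applied to `T'`: `s` is the special
column of `T'`; the maximal run of topmost one-box tiles in columns `s+1, s+2, …` is
removed; and the result is the spread of `T` at `s`. -/
def RibbonShrinkRel {n : ℕ} (T' : DyckTiling (n + 1)) (T : DyckTiling n) (s : ℤ) : Prop :=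
  SpecialCol T' s ∧
  ∃ r : ℤ, s < r ∧
    (∀ x : ℤ, s < x → x < r → ({(x, T'.upper.ht x - 2)} : Finset (ℤ × ℤ)) ∈ T'.tiles) ∧
    ({(r, T'.upper.ht r - 2)} : Finset (ℤ × ℤ)) ∉ T'.tiles ∧
    (∀ x : ℤ, spreadHt T.lower s x = T'.lower.ht x) ∧
    (∀ x : ℤ, spreadHt T.upper s x =
      if s < x ∧ x < r then T'.upper.ht x - 2 else T'.upper.ht x) ∧
    spreadTiles s T.tiles =
      T'.tiles \ ((Finset.Ioo s r).image fun x => ({(x, T'.upper.ht x - 2)} : Finset (ℤ × ℤ)))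

/-- `IsDTS n p T`: `T` is the Dyck tiling `DTS(p_1, …, p_n)` (indices 0-based, so the
growth column for step `i` is `p i - i`). -/
inductive IsDTS : (n : ℕ) → (Fin n → ℕ) → DyckTiling n → Prop where
  | nil (p : Fin 0 → ℕ) (T : DyckTiling 0) : IsDTS 0 p T
  | cons (n : ℕ) (p : Fin (n + 1) → ℕ) (T : DyckTiling n) (T' : DyckTiling (n + 1)) :
      IsDTS n (fun i => p i.castSucc) T →
      StripGrowRel T ((p (Fin.last n) : ℤ) - n) T' → IsDTS (n + 1) p T'

/-- `IsDTR n p T`: `T` is the Dyck tiling `DTR(p_1, …, p_n)`. -/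
inductive IsDTR : (n : ℕ) → (Fin n → ℕ) → DyckTiling n → Prop where
  | nil (p : Fin 0 → ℕ) (T : DyckTiling 0) : IsDTR 0 p T
  | cons (n : ℕ) (p : Fin (n + 1) → ℕ) (T : DyckTiling n) (T' : DyckTiling (n + 1)) :
      IsDTR n (fun i => p i.castSucc) T →
      RibbonGrowRel T ((p (Fin.last n) : ℤ) - n) T' → IsDTR (n + 1) p T'

/-- `T = DTS(λ, σ)`. -/
def IsDTSof {n : ℕ} (lam : DyckPath n) (σ : Equiv.Perm (Fin n)) (T : DyckTiling n) : Prop :=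
  ∃ C : ChordLabeling lam, IsStandardization C.l σ ∧ IsDTS n (seqOf C) T

/-- `T = DTR(λ, σ)`. -/
def IsDTRof {n : ℕ} (lam : DyckPath n) (σ : Equiv.Perm (Fin n)) (T : DyckTiling n) : Prop :=
  ∃ C : ChordLabeling lam, IsStandardization C.l σ ∧ IsDTR n (seqOf C) T

/-- Increment `a` if it exceeds `p`. -/
def bump (p a : ℕ) : ℕ := if p < a then a + 1 else a

/-- The perfect matching `match(p_1, …, p_n)` of `{1, …, 2n}`. -/
def matchSeq : (n : ℕ) → (Fin n → ℕ) → Finset (ℕ × ℕ)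
  | 0, _ => ∅
  | n + 1, p =>
    ((matchSeq n fun i => p i.castSucc).image fun q =>
      (bump (p (Fin.last n)) q.1, bump (p (Fin.last n)) q.2)) ∪
      {(p (Fin.last n) + 1, 2 * (n + 1))}

/-- The number of nestings of a matching: pairs `(a,b)`, `(c,d)` with `c < a < b < d`. -/
def nestings (M : Finset (ℕ × ℕ)) : ℕ :=
  ((M ×ˢ M).filter fun q => q.2.1 < q.1.1 ∧ q.1.1 < q.1.2 ∧ q.1.2 < q.2.2).card

/-- `w` is the min-word of `M`: the list of the smaller elements of the pairs of `M`,
sorted by the larger elements. -/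
def IsMinWord (n : ℕ) (M : Finset (ℕ × ℕ)) (w : Fin n → ℕ) : Prop :=
  ∃ b : Fin n → ℕ, StrictMono b ∧ (∀ i, w i < b i) ∧
    M = Finset.univ.image fun i => (w i, b i)

/-- The number of tiles of `T` containing boxes over both endpoint columns of the
chord with endpoints at step positions `p < q`. -/
def chordTileCount {n : ℕ} (T : DyckTiling n) (p q : ℕ) : ℕ :=
  (T.tiles.filter fun t =>
    (∃ c ∈ t, (c : ℤ × ℤ).1 = (p : ℤ) + 1 - n) ∧ (∃ c ∈ t, (c : ℤ × ℤ).1 = (q : ℤ) - n)).card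

/-- A Dyck tableau of order `n` over the zigzag path `Z` of order `n+1`: a skew shape
`Z/μ` with `n` dots, one in each column of the skew shape through a valley of `Z`. -/
structure DyckTableau (n : ℕ) (Z : DyckPath (n + 1)) where
  upper : DyckPath (n + 1)
  below : ∀ x : ℤ, Z.ht x ≤ upper.ht x
  dots : Finset (ℤ × ℤ)
  sub : dots ⊆ skewCells Z upper
  card_dots : dots.card = n
  valley : ∀ x : ℤ, Z.ht (x - 1) = Z.ht x + 1 → Z.ht (x + 1) = Z.ht x + 1 →
    (dots.filter fun c => c.1 = x).card = 1

/-- The `q`-integer `[m]_q = 1 + q + ⋯ + q^(m-1)` as a polynomial. -/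
def qint (m : ℕ) : Polynomial ℤ := ∑ i ∈ Finset.range m, Polynomial.X ^ i

/-- The `q`-factorial `[n]_q!`. -/
def qfact (n : ℕ) : Polynomial ℤ := ∏ i ∈ Finset.range n, qint (i + 1)


namespace DyckPath

lemma ht_add_eq {n : ℕ} (P : DyckPath n) {x : ℤ} (h₁ : -(n : ℤ) ≤ x) (h₂ : x ≤ n) :
    P.ht x + 2 * ((Finset.univ.filter fun i : Fin (2 * n) =>
      ((i : ℕ) : ℤ) < x + n ∧ P.step i = false).card : ℤ) = x + n := by
  obtain ⟨k, hk⟩ := Int.eq_ofNat_of_zero_le (by omega : 0 ≤ x + n)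
  have hsplit := Finset.card_filter_add_card_filter_not
    (s := Finset.univ.filter fun i : Fin (2 * n) => (i : ℕ) < k) (fun i => P.step i = true)
  have hcard : (Finset.univ.filter fun i : Fin (2 * n) => (i : ℕ) < k).card = k := by
    rw [Fin.card_filter_val_lt]; omega
  rw [hcard] at hsplit
  simp only [Finset.filter_filter, Bool.not_eq_true] at hsplit
  unfold ht
  simp only [hk, Nat.cast_lt]
  omega

lemma ht_nonneg {n : ℕ} (P : DyckPath n) {x : ℤ} (h₁ : -(n : ℤ) ≤ x) (h₂ : x ≤ n) :
    0 ≤ P.ht x := by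
  obtain ⟨k, hk⟩ := Int.eq_ofNat_of_zero_le (by omega : 0 ≤ x + n)
  have := P.nonneg k (by omega)
  unfold ht
  simp only [hk, Nat.cast_lt]
  omega

lemma ht_le {n : ℕ} (P : DyckPath n) (x : ℤ) : P.ht x ≤ n := by
  have h := Finset.card_le_card (Finset.monotone_filter_right Finset.univ
    (fun (i : Fin (2 * n)) _ (h : ((i : ℕ) : ℤ) < x + n ∧ P.step i = true) => h.2))
  rw [P.balanced] at h
  unfold ht
  omega

lemma ht_of_order_zero (P : DyckPath 0) (x : ℤ) : P.ht x = 0 := by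
  simp [ht]

end DyckPath

/-- The columns of a skew shape have half the height difference many boxes. -/
lemma card_skewCells {n : ℕ} (lam mu : DyckPath n) (D : ℤ → ℕ)
    (hD : ∀ x, mu.ht x - lam.ht x = 2 * D x) :
    (skewCells lam mu).card = ∑ x ∈ Finset.Icc (-(n : ℤ)) n, D x := by
  rw [Finset.card_eq_sum_card_fiberwise (f := Prod.fst) (t := Finset.Icc (-(n : ℤ)) n)]
  · refine Finset.sum_congr rfl fun x hx => ?_
    rw [Finset.mem_Icc] at hx
    have hpar := lam.ht_add_eq hx.1 hx.2
    have hnonneg := lam.ht_nonneg hx.1 hx.2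
    have hle := mu.ht_le x
    have hDx := hD x
    have himage : (skewCells lam mu).filter (fun c => c.1 = x) =
        (Finset.range (D x)).image fun j : ℕ => (x, lam.ht x + 2 * (j : ℤ)) := by
      ext ⟨y, z⟩
      simp only [skewCells, Finset.mem_filter, Finset.mem_product, Finset.mem_Icc,
        Finset.mem_image, Finset.mem_range, Prod.mk.injEq]
      constructor
      · rintro ⟨⟨-, h⟩, rfl⟩
        exact ⟨((z - lam.ht y) / 2).toNat, by omega, rfl, by omega⟩
      · rintro ⟨j, hj, rfl, rfl⟩
        omega
    rw [himage, Finset.card_image_of_injective, Finset.card_range]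
    intro i j hij
    simpa using hij
  · intro c hc
    simp only [skewCells, Finset.coe_filter, Set.mem_ofPred_eq, Finset.mem_product] at hc
    exact hc.1.1

section Spread

lemma mem_spreadTile {s : ℤ} {t : Finset (ℤ × ℤ)} {x z : ℤ} :
    (x, z) ∈ spreadTile s t ↔
      (x < s ∧ (x + 1, z) ∈ t) ∨ (x = s ∧ (x, z - 1) ∈ t) ∨ (s < x ∧ (x - 1, z) ∈ t) := by
  simp only [spreadTile, Finset.mem_union, Finset.mem_image, Finset.mem_filter, Prod.exists,
    Prod.mk.injEq]
  constructor
  · rintro ((⟨a, b, ⟨h, ha⟩, rfl, rfl⟩ | ⟨a, b, ⟨h, rfl⟩, rfl, rfl⟩) | ⟨a, b, ⟨h, ha⟩, rfl, rfl⟩)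
    · exact Or.inl ⟨by omega, by simpa using h⟩
    · exact Or.inr (Or.inl ⟨rfl, by simpa using h⟩)
    · exact Or.inr (Or.inr ⟨by omega, by simpa using h⟩)
  · rintro (⟨hx, h⟩ | ⟨rfl, h⟩ | ⟨hx, h⟩)
    · exact Or.inl (Or.inl ⟨_, _, ⟨h, by omega⟩, by omega, rfl⟩)
    · exact Or.inl (Or.inr ⟨_, _, ⟨h, rfl⟩, rfl, by omega⟩)
    · exact Or.inr ⟨_, _, ⟨h, by omega⟩, by omega, rfl⟩

lemma mem_iff_mem_spreadTile_left {s : ℤ} {t : Finset (ℤ × ℤ)} {x z : ℤ} (hx : x ≤ s) :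
    (x, z) ∈ t ↔ (x - 1, z) ∈ spreadTile s t := by
  rw [mem_spreadTile]
  constructor
  · intro h
    exact Or.inl ⟨by omega, by simpa using h⟩
  · rintro (⟨-, h⟩ | ⟨h, -⟩ | ⟨h, -⟩)
    · simpa using h
    · omega
    · omega

lemma mem_iff_mem_spreadTile_right {s : ℤ} {t : Finset (ℤ × ℤ)} {x z : ℤ} (hx : s ≤ x) :
    (x, z) ∈ t ↔ (x + 1, z) ∈ spreadTile s t := by
  rw [mem_spreadTile]
  constructor
  · intro h
    exact Or.inr (Or.inr ⟨by omega, by simpa using h⟩)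
  · rintro (⟨h, -⟩ | ⟨h, -⟩ | ⟨-, h⟩)
    · omega
    · omega
    · simpa using h

lemma spreadTile_injective (s : ℤ) : Function.Injective (spreadTile s) := by
  intro t u htu
  ext ⟨x, z⟩
  rcases le_total x s with hx | hx
  · rw [mem_iff_mem_spreadTile_left hx, htu, ← mem_iff_mem_spreadTile_left hx]
  · rw [mem_iff_mem_spreadTile_right hx, htu, ← mem_iff_mem_spreadTile_right hx]

lemma spreadTile_singleton_of_lt {s x : ℤ} (z : ℤ) (hx : s < x) :
    spreadTile s {(x, z)} = {(x + 1, z)} := by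
  ext ⟨y, w⟩
  simp only [mem_spreadTile, Finset.mem_singleton, Prod.mk.injEq]
  omega

lemma spreadTile_ne_singleton (s z : ℤ) (t : Finset (ℤ × ℤ)) : spreadTile s t ≠ {(s, z)} := by
  intro h
  have hmem : (s, z) ∈ spreadTile s t := by simp [h]
  rw [mem_spreadTile] at hmem
  have ht : (s, z - 1) ∈ t := by
    rcases hmem with ⟨h', -⟩ | ⟨-, h'⟩ | ⟨h', -⟩
    · omega
    · exact h'
    · omega
  rw [mem_iff_mem_spreadTile_left le_rfl, h] at ht
  simp at ht

lemma singleton_mem_spreadTiles {s x z : ℤ} (hx : s < x) {ts : Finset (Finset (ℤ × ℤ))} :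
    {(x + 1, z)} ∈ spreadTiles s ts ↔ {(x, z)} ∈ ts := by
  rw [← spreadTile_singleton_of_lt z hx, spreadTiles, (spreadTile_injective s).mem_finset_image]

lemma singleton_notMem_spreadTiles (s z : ℤ) (ts : Finset (Finset (ℤ × ℤ))) :
    {(s, z)} ∉ spreadTiles s ts := by
  simp only [spreadTiles, Finset.mem_image, not_exists, not_and]
  exact fun t _ => spreadTile_ne_singleton s z t

variable {n : ℕ} (P : DyckPath n)

lemma spreadHt_of_lt {s x : ℤ} (h : x < s) : spreadHt P s x = P.ht (x + 1) := by
  simp [spreadHt, h]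

lemma spreadHt_self (s : ℤ) : spreadHt P s s = P.ht s + 1 := by
  simp [spreadHt]

lemma spreadHt_of_gt {s x : ℤ} (h : s < x) : spreadHt P s x = P.ht (x - 1) := by
  simp [spreadHt, h.not_gt, h.ne']

lemma eligibleCol_spread_self (s : ℤ) (ts : Finset (Finset (ℤ × ℤ))) :
    EligibleCol (spreadHt P s) (spreadTiles s ts) s := by
  refine ⟨?_, singleton_notMem_spreadTiles _ _ _⟩
  rw [spreadHt_self, spreadHt_of_lt P (by omega : s - 1 < s)]
  simp

/-- Right of the spreading column, eligible columns of the spread tiling are the shifted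
eligible columns of the original one. -/
lemma eligibleCol_spread_of_gt {s c : ℤ} (hc : s < c) (ts : Finset (Finset (ℤ × ℤ))) :
    EligibleCol (spreadHt P s) (spreadTiles s ts) c ↔
      s < c - 1 ∧ EligibleCol P.ht ts (c - 1) := by
  unfold EligibleCol
  by_cases h : s < c - 1
  · have := singleton_mem_spreadTiles (z := P.ht (c - 1) - 2) h (ts := ts)
    rw [sub_add_cancel] at this
    rw [spreadHt_of_gt P hc, spreadHt_of_gt P h, this]
    simp [h]
  · obtain rfl : c = s + 1 := by omega
    simp only [h, false_and, iff_false, not_and]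
    intro h'
    rw [spreadHt_of_gt P hc, add_sub_cancel_right, spreadHt_self] at h'
    omega

end Spread

section RibbonGrow

variable {n : ℕ} {T : DyckTiling n} {s : ℤ} {T' : DyckTiling (n + 1)}

/-- After ribbon-growing at column `s`, the special column is `s`. -/
lemma RibbonGrowRel.specialCol (h : RibbonGrowRel T s T') : SpecialCol T' s := by
  obtain ⟨-, Q, hQ, hmax, hup, htiles⟩ := h
  have hs := eligibleCol_spread_self T.upper s T.tiles
  refine ⟨⟨?_, ?_⟩, ?_⟩
  · rw [hup, hup, if_neg (by omega), if_neg (by omega)]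
    exact hs.1
  · rw [htiles, Finset.mem_union, not_or]
    refine ⟨singleton_notMem_spreadTiles _ _ _, ?_⟩
    simp only [Finset.mem_image, Finset.mem_Ioo, not_exists, not_and]
    rintro x hx heq
    simp only [Finset.singleton_inj, Prod.mk.injEq] at heq
    omega
  · rintro c ⟨hc₁, hc₂⟩
    by_contra! hcs
    rw [htiles, Finset.mem_union, not_or] at hc₂
    rcases lt_trichotomy c Q with hcQ | rfl | hcQ
    · refine hc₂.2 (Finset.mem_image.2 ⟨c, Finset.mem_Ioo.2 ⟨hcs, hcQ⟩, ?_⟩)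
      rw [hup, if_pos ⟨hcs, hcQ⟩, add_sub_cancel_right]
    · have hgt := ((eligibleCol_spread_of_gt T.upper hcs T.tiles).1 hQ).1
      rw [hup, hup, if_neg (by omega), if_pos (by omega)] at hc₁
      have := hQ.1
      omega
    · rw [hup, hup, if_neg (by omega), if_neg (by omega)] at hc₁
      rw [hup, if_neg (by omega)] at hc₂
      have := hmax c ⟨hc₁, hc₂.1⟩
      omega

/-- Spreading followed by the addition of a ribbon of one-box tiles over the columns
strictly between `s` and `Q`. -/
def AddsRibbon {n : ℕ} (T : DyckTiling n) (s Q : ℤ) (T' : DyckTiling (n + 1)) : Prop :=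
  (∀ x : ℤ, T'.upper.ht x - T'.lower.ht x =
    spreadHt T.upper s x - spreadHt T.lower s x + if s < x ∧ x < Q then 2 else 0) ∧
  T'.tiles.card = T.tiles.card + (Q - s - 1).toNat

lemma RibbonGrowRel.addsRibbon_of_Ioo_eq (h : RibbonGrowRel T s T') {Q' : ℤ}
    (hQ' : ∀ Q, EligibleCol (spreadHt T.upper s) (spreadTiles s T.tiles) Q →
      (∀ c, EligibleCol (spreadHt T.upper s) (spreadTiles s T.tiles) c → c ≤ Q) →
      Finset.Ioo s Q = Finset.Ioo s Q') : AddsRibbon T s Q' T' := by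
  obtain ⟨hlow, Q, hQ, hmax, hup, htiles⟩ := h
  have hIoo := hQ' Q hQ hmax
  constructor
  · intro x
    have hx : (s < x ∧ x < Q) ↔ (s < x ∧ x < Q') := by
      simpa only [Finset.mem_Ioo] using Finset.ext_iff.1 hIoo x
    rw [hup, hlow]
    simp only [hx]
    split_ifs <;> ring
  · rw [htiles, hIoo, Finset.card_union_of_disjoint, spreadTiles,
      Finset.card_image_of_injective _ (spreadTile_injective s),
      Finset.card_image_of_injective, Int.card_Ioo]
    · intro x y hxy
      simp only [Finset.singleton_inj, Prod.mk.injEq] at hxy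
      exact hxy.1
    · rw [Finset.disjoint_right]
      simp only [spreadTiles, Finset.mem_image, Finset.mem_Ioo, not_exists, not_and]
      rintro _ ⟨x, hx, rfl⟩ t ht heq
      have hmem : (x - 1, T.upper.ht (x - 1)) ∈ t := by
        rw [mem_iff_mem_spreadTile_right (by omega : s ≤ x - 1), heq,
          spreadHt_of_gt _ hx.1]
        simp
      have hcell : (x - 1, T.upper.ht (x - 1)) ∈ skewCells T.lower T.upper := by
        rw [← T.cover]
        exact Finset.mem_biUnion.2 ⟨t, ht, hmem⟩
      simp only [skewCells, Finset.mem_filter] at hcell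
      omega

lemma RibbonGrowRel.addsRibbon (h : RibbonGrowRel T s T') {c : ℤ} (hc : SpecialCol T c) :
    AddsRibbon T s (c + 1) T' := by
  refine h.addsRibbon_of_Ioo_eq fun Q hQ hmax => ?_
  have hs := hmax s (eligibleCol_spread_self T.upper s T.tiles)
  have hle : s < Q → Q ≤ c + 1 := fun hsQ => by
    have := hc.2 _ ((eligibleCol_spread_of_gt T.upper hsQ T.tiles).1 hQ).2
    omega
  have hge : s < c → c + 1 ≤ Q := fun hsc => by
    refine hmax _ ((eligibleCol_spread_of_gt T.upper (by omega) T.tiles).2 ?_)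
    rw [add_sub_cancel_right]
    exact ⟨hsc, hc.1⟩
  ext x
  simp only [Finset.mem_Ioo]
  omega

lemma RibbonGrowRel.addsRibbon_of_order_zero {T : DyckTiling 0} {T' : DyckTiling 1}
    (h : RibbonGrowRel T s T') : AddsRibbon T s s T' := by
  refine h.addsRibbon_of_Ioo_eq fun Q hQ hmax => ?_
  have hs := hmax s (eligibleCol_spread_self T.upper s T.tiles)
  rcases hs.eq_or_lt with rfl | hlt
  · rfl
  · have := ((eligibleCol_spread_of_gt T.upper hlt T.tiles).1 hQ).2.1
    simp [DyckPath.ht_of_order_zero] at this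

end RibbonGrow

/-- The number of endpoints of the first `k` intervals `[L j, R j]` which lie left of `m`. -/
def endpointRank (L R : ℕ → ℕ) (k m : ℕ) : ℕ :=
  ((Finset.range k).filter fun j => L j < m).card +
    ((Finset.range k).filter fun j => R j < m).card

/-- A sequence of `N` intervals none of which has endpoints of earlier intervals
between its own endpoints. -/
structure IntervalSeq (N : ℕ) (L R : ℕ → ℕ) : Prop where
  lt : ∀ i < N, L i < R i
  left : ∀ i k, i < k → k < N → L i < L k ∨ R k < L i
  right : ∀ i k, i < k → k < N → R i < L k ∨ R k < R i

section EndpointRank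

variable {N : ℕ} {L R : ℕ → ℕ}

lemma endpointRank_succ (L R : ℕ → ℕ) (k m : ℕ) :
    endpointRank L R (k + 1) m =
      endpointRank L R k m + (if L k < m then 1 else 0) + (if R k < m then 1 else 0) := by
  simp only [endpointRank, Finset.range_add_one, Finset.filter_insert]
  split_ifs <;> simp <;> omega

lemma endpointRank_mono (L R : ℕ → ℕ) (k : ℕ) : Monotone (endpointRank L R k) := by
  intro a b hab
  exact Nat.add_le_add
    (Finset.card_le_card (Finset.monotone_filter_right _ fun j _ (h : L j < a) => h.trans_le hab))
    (Finset.card_le_card (Finset.monotone_filter_right _ fun j _ (h : R j < a) => h.trans_le hab))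

lemma endpointRank_left_lt {i k m : ℕ} (hi : i < k) (hm : L i < m) :
    endpointRank L R k (L i) < endpointRank L R k m := by
  refine Nat.add_lt_add_of_lt_of_le (Finset.card_lt_card ?_)
    (Finset.card_le_card (Finset.monotone_filter_right _ fun j _ (h : R j < L i) => h.trans hm))
  refine (Finset.ssubset_iff_of_subset
    (Finset.monotone_filter_right _ fun j _ (h : L j < L i) => h.trans hm)).2 ⟨i, ?_, ?_⟩
  · simp [hi, hm]
  · simp

lemma endpointRank_right_lt {i k m : ℕ} (hi : i < k) (hm : R i < m) :
    endpointRank L R k (R i) < endpointRank L R k m := by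
  refine Nat.add_lt_add_of_le_of_lt
    (Finset.card_le_card (Finset.monotone_filter_right _ fun j _ (h : L j < R i) => h.trans hm))
    (Finset.card_lt_card ?_)
  refine (Finset.ssubset_iff_of_subset
    (Finset.monotone_filter_right _ fun j _ (h : R j < R i) => h.trans hm)).2 ⟨i, ?_, ?_⟩
  · simp [hi, hm]
  · simp

/-- The endpoints of a new interval are adjacent. -/
lemma IntervalSeq.endpointRank_right (h : IntervalSeq N L R) {k : ℕ} (hk : k < N) :
    endpointRank L R k (R k) = endpointRank L R k (L k) := by
  have hlt := h.lt k hk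
  unfold endpointRank
  congr 2
  · refine Finset.filter_congr fun j hj => ?_
    have := h.left j k (Finset.mem_range.1 hj) hk
    omega
  · refine Finset.filter_congr fun j hj => ?_
    have := h.right j k (Finset.mem_range.1 hj) hk
    omega

/-- An endpoint of an earlier interval is shifted by two exactly if it is to the right
of a newly inserted interval. -/
lemma IntervalSeq.endpointRank_succ_left (h : IntervalSeq N L R) {i k : ℕ} (hi : i < k)
    (hk : k < N) :
    (endpointRank L R k (L i) < endpointRank L R k (L k) ∧
      endpointRank L R (k + 1) (L i) = endpointRank L R k (L i)) ∨
    (endpointRank L R k (L k) ≤ endpointRank L R k (L i) ∧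
      endpointRank L R (k + 1) (L i) = endpointRank L R k (L i) + 2) := by
  have hlt := h.lt k hk
  rw [endpointRank_succ]
  rcases h.left i k hi hk with h' | h'
  · exact Or.inl ⟨endpointRank_left_lt hi h', by rw [if_neg (by omega), if_neg (by omega), add_zero, add_zero]⟩
  · exact Or.inr ⟨endpointRank_mono _ _ _ (by omega), by rw [if_pos (by omega), if_pos h']⟩

lemma IntervalSeq.endpointRank_succ_right (h : IntervalSeq N L R) {i k : ℕ} (hi : i < k)
    (hk : k < N) :
    (endpointRank L R k (R i) < endpointRank L R k (L k) ∧
      endpointRank L R (k + 1) (R i) = endpointRank L R k (R i)) ∨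
    (endpointRank L R k (L k) ≤ endpointRank L R k (R i) ∧
      endpointRank L R (k + 1) (R i) = endpointRank L R k (R i) + 2) := by
  have hlt := h.lt k hk
  rw [endpointRank_succ]
  rcases h.right i k hi hk with hlk | hgt
  · exact Or.inl ⟨endpointRank_right_lt hi hlk, by rw [if_neg (by omega), if_neg (by omega), add_zero, add_zero]⟩
  · exact Or.inr ⟨endpointRank_mono _ _ _ (by omega), by rw [if_pos (by omega), if_pos hgt]⟩

/-- If the intervals exhaust `{0, …, 2N - 1}`, the rank of a position is the position. -/
lemma IntervalSeq.endpointRank_eq (h : IntervalSeq N L R) (hR : ∀ i < N, R i < 2 * N) {m : ℕ}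
    (hm : m ≤ 2 * N) : endpointRank L R N m = m := by
  have hLinj : Set.InjOn L (Finset.range N) := by
    intro i hi j hj hij
    simp only [Finset.coe_range, Set.mem_Iio] at hi hj
    have h₁ := h.left i j
    have h₂ := h.left j i
    have h₃ := h.lt i hi
    have h₄ := h.lt j hj
    omega
  have hRinj : Set.InjOn R (Finset.range N) := by
    intro i hi j hj hij
    simp only [Finset.coe_range, Set.mem_Iio] at hi hj
    have h₁ := h.right i j
    have h₂ := h.right j i
    have h₃ := h.lt i hi
    have h₄ := h.lt j hj
    omega
  have hdisj : Disjoint ((Finset.range N).image L) ((Finset.range N).image R) := by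
    rw [Finset.disjoint_left]
    simp only [Finset.mem_image, Finset.mem_range, not_exists, not_and]
    rintro _ ⟨i, hi, rfl⟩ j hj hij
    have h₁ := h.left i j
    have h₂ := h.right j i
    have h₃ := h.lt i hi
    have h₄ := h.lt j hj
    rcases lt_trichotomy i j with hlt | rfl | hlt <;> omega
  have hunion : (Finset.range N).image L ∪ (Finset.range N).image R = Finset.range (2 * N) := by
    apply Finset.eq_of_subset_of_card_le
    · intro x hx
      simp only [Finset.mem_union, Finset.mem_image, Finset.mem_range] at hx ⊢
      rcases hx with ⟨i, hi, rfl⟩ | ⟨i, hi, rfl⟩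
      · exact (h.lt i hi).trans (hR i hi)
      · exact hR i hi
    · rw [Finset.card_union_of_disjoint hdisj, Finset.card_image_of_injOn hLinj,
        Finset.card_image_of_injOn hRinj]
      simp only [Finset.card_range]
      omega
  have hfilter := congrArg (fun s : Finset ℕ => (s.filter (· < m)).card) hunion
  simp only [Finset.filter_union, Finset.filter_image] at hfilter
  rw [Finset.card_union_of_disjoint (hdisj.mono (Finset.image_subset_image
      (Finset.filter_subset _ _)) (Finset.image_subset_image (Finset.filter_subset _ _))),
    Finset.card_image_of_injOn (hLinj.mono (by simp +contextual [Set.subset_def])),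
    Finset.card_image_of_injOn (hRinj.mono (by simp +contextual [Set.subset_def]))] at hfilter
  rw [endpointRank, hfilter]
  have : (Finset.range (2 * N)).filter (· < m) = Finset.range m := by
    ext x
    simp only [Finset.mem_filter, Finset.mem_range]
    omega
  rw [this, Finset.card_range]

lemma endpointRank_eq_add {k N : ℕ} (hk : k ≤ N) (m : ℕ) :
    endpointRank L R N m = endpointRank L R k m +
      ((Finset.Ico k N).filter fun j => L j < m).card +
      ((Finset.Ico k N).filter fun j => R j < m).card := by
  have hsplit (p : ℕ → Prop) [DecidablePred p] : ((Finset.range N).filter p).card =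
      ((Finset.range k).filter p).card + ((Finset.Ico k N).filter p).card := by
    simp only [Finset.card_filter]
    exact (Finset.sum_range_add_sum_Ico _ hk).symm
  unfold endpointRank
  rw [hsplit, hsplit]
  omega

lemma card_filter_lt_sub {s : Finset ℕ} (f : ℕ → ℕ) {a b : ℕ} (hab : a ≤ b) :
    (s.filter fun j => f j < b).card =
      (s.filter fun j => f j < a).card + (s.filter fun j => a ≤ f j ∧ f j < b).card := by
  rw [← Finset.card_union_of_disjoint]
  · congr 1
    ext j
    simp only [Finset.mem_union, Finset.mem_filter]
    grind
  · rw [Finset.disjoint_filter]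
    intro j _ h
    omega

/-- At a descent, the length of the ribbon created by the insertion of interval `i + 1`. -/
lemma IntervalSeq.ribbon_length (h : IntervalSeq N L R) (hR : ∀ i < N, R i < 2 * N) {i : ℕ}
    (hi : i + 1 < N) (hdes : L (i + 1) < L i) :
    (endpointRank L R i (L i) : ℤ) + 1 - endpointRank L R (i + 1) (L (i + 1)) =
      (L i : ℤ) - R (i + 1) -
        2 * ((Finset.Ico (i + 2) N).filter fun j => R (i + 1) < L j ∧ L j < L i).card := by
  have hRL : R (i + 1) < L i := by
    rcases h.left i (i + 1) (by omega) hi with h' | h' <;> omega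
  have hLlt := h.lt i (by omega)
  have hRlt := h.lt (i + 1) hi
  have hRN := hR i (by omega)
  have e₁ := endpointRank_eq_add (L := L) (R := R) (by omega : i + 2 ≤ N) (L i)
  have e₂ := endpointRank_eq_add (L := L) (R := R) (by omega : i + 2 ≤ N) (R (i + 1))
  rw [h.endpointRank_eq hR (by omega), endpointRank_succ, endpointRank_succ,
    if_neg (by omega), if_neg (by omega), if_pos hdes, if_pos hRL] at e₁
  rw [h.endpointRank_eq hR (by omega), endpointRank_succ, h.endpointRank_right hi,
    if_pos hRlt, if_neg (by omega)] at e₂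
  rw [card_filter_lt_sub L hRL.le, card_filter_lt_sub R hRL.le] at e₁
  have c₁ : (Finset.Ico (i + 2) N).filter (fun j => R (i + 1) ≤ L j ∧ L j < L i) =
      (Finset.Ico (i + 2) N).filter fun j => R (i + 1) < L j ∧ L j < L i := by
    refine Finset.filter_congr fun j hj => ?_
    rw [Finset.mem_Ico] at hj
    have := h.right (i + 1) j (by omega) hj.2
    have := h.lt j hj.2
    omega
  have c₂ : (Finset.Ico (i + 2) N).filter (fun j => R (i + 1) ≤ R j ∧ R j < L i) =
      (Finset.Ico (i + 2) N).filter fun j => R (i + 1) < L j ∧ L j < L i := by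
    refine Finset.filter_congr fun j hj => ?_
    rw [Finset.mem_Ico] at hj
    have := h.right (i + 1) j (by omega) hj.2
    have := h.left i j (by omega) hj.2
    have := h.lt j hj.2
    omega
  rw [c₁, c₂] at e₁
  omega

end EndpointRank

/-- The number of ribbons above column `x` after `n` insertions. -/
def ribbonCount (L R : ℕ → ℕ) (n : ℕ) (x : ℤ) : ℕ :=
  ∑ i ∈ Finset.range (n - 1), if L (i + 1) < L i ∧
    (endpointRank L R n (R (i + 1)) : ℤ) < x + n ∧ x + n ≤ endpointRank L R n (L i) then 1 else 0

lemma IntervalSeq.ribbonCount_succ {N : ℕ} {L R : ℕ → ℕ} (h : IntervalSeq N L R) {n : ℕ}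
    (hn : n + 1 < N) (x : ℤ) :
    let s : ℤ := endpointRank L R (n + 1) (L (n + 1)) - (n + 1 : ℕ)
    ribbonCount L R (n + 2) x =
      ribbonCount L R (n + 1) (if x < s then x + 1 else if x = s then s else x - 1) +
        if s < x ∧ x < (endpointRank L R n (L n) : ℤ) - n + 1 then 1 else 0 := by
  intro s
  unfold ribbonCount
  simp only [Nat.add_succ_sub_one, Finset.sum_range_succ]
  congr 1
  · refine Finset.sum_congr rfl fun i hi => ?_
    rw [Finset.mem_range] at hi
    have h₁ := h.endpointRank_succ_left (by omega : i < n + 1) hn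
    have h₂ := h.endpointRank_succ_right (by omega : i + 1 < n + 1) hn
    refine if_congr (and_congr_right fun _ => ?_) rfl rfl
    rw [add_assoc n 1 1] at h₁ h₂
    push_cast at *
    split_ifs <;> omega
  · have hlt := h.lt _ hn
    have e₁ : endpointRank L R (n + 1) (L n) = endpointRank L R n (L n) := by
      have := h.lt n (by omega)
      rw [endpointRank_succ, if_neg (by omega), if_neg (by omega), add_zero, add_zero]
    have e₂ : endpointRank L R (n + 2) (R (n + 1)) = endpointRank L R (n + 1) (L (n + 1)) + 1 := by
      rw [endpointRank_succ, h.endpointRank_right hn, if_pos hlt, if_neg (by omega)]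
    refine if_congr ?_ rfl rfl
    rcases h.left n (n + 1) (by omega) hn with h' | h'
    · have := endpointRank_left_lt (R := R) (by omega : n < n + 1) h'
      push_cast at *
      omega
    · have e₃ : endpointRank L R (n + 2) (L n) = endpointRank L R n (L n) + 2 := by
        rw [endpointRank_succ, e₁, if_pos (by omega), if_pos h']
      push_cast at *
      omega

/-- The shape and the number of tiles of a tiling grown from a sequence of intervals. -/
lemma IsDTR.shape {N : ℕ} {L R : ℕ → ℕ} (h : IntervalSeq N L R) {n : ℕ} {p : Fin n → ℕ}
    {T : DyckTiling n} (hT : IsDTR n p T) (hn : n ≤ N)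
    (hp : ∀ i : Fin n, p i = endpointRank L R i (L i)) :
    (∀ x, T.upper.ht x - T.lower.ht x = 2 * ribbonCount L R n x) ∧
    (T.tiles.card : ℤ) = ∑ i ∈ Finset.range (n - 1), (if L (i + 1) < L i then
      (endpointRank L R i (L i) : ℤ) + 1 - endpointRank L R (i + 1) (L (i + 1)) else 0) ∧
    (0 < n → SpecialCol T ((endpointRank L R (n - 1) (L (n - 1)) : ℤ) - (n - 1 : ℕ))) := by
  induction hT with
  | nil p T =>
    have htiles : T.tiles = ∅ := by
      refine Finset.eq_empty_of_forall_notMem fun t ht => ?_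
      obtain ⟨a, b, f, hab, -, -, -, rfl⟩ := T.isDyck t ht
      have hmem : (a, f a) ∈ skewCells T.lower T.upper := by
        rw [← T.cover]
        exact Finset.mem_biUnion.2 ⟨_, ht, Finset.mem_image.2 ⟨a, by simpa using hab, rfl⟩⟩
      simp only [skewCells, Finset.mem_filter, DyckPath.ht_of_order_zero] at hmem
      omega
    simp [htiles, ribbonCount, DyckPath.ht_of_order_zero]
  | cons n p T T' _ hgrow ih =>
    obtain ⟨hht, htiles, hspec⟩ := ih (by omega) fun i => hp i.castSucc
    have hlast := hp (Fin.last n)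
    rw [Fin.val_last] at hlast
    rw [hlast] at hgrow
    refine ⟨?_, ?_, fun _ => hgrow.specialCol⟩
    · intro x
      cases n with
      | zero =>
        rw [hgrow.addsRibbon_of_order_zero.1]
        simp only [ribbonCount, spreadHt, DyckPath.ht_of_order_zero]
        simp
        omega
      | succ n =>
        rw [(hgrow.addsRibbon (hspec (by omega))).1, h.ribbonCount_succ (by omega) x]
        push_cast
        rw [mul_add, ← hht]
        simp only [spreadHt]
        split_ifs <;> simp
    · cases n with
      | zero =>
        rw [hgrow.addsRibbon_of_order_zero.2]
        simpa using htiles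
      | succ n =>
        rw [(hgrow.addsRibbon (hspec (by omega))).2]
        simp only [Nat.add_sub_cancel] at htiles ⊢
        rw [Finset.sum_range_succ, Nat.cast_add, htiles]
        congr 1
        have hlt := h.lt _ (by omega : n < N)
        have e₁ : endpointRank L R (n + 1) (L n) = endpointRank L R n (L n) := by
          rw [endpointRank_succ, if_neg (by omega), if_neg (by omega), add_zero, add_zero]
        rcases h.left n (n + 1) (by omega) (by omega) with h' | h'
        · have := endpointRank_left_lt (R := R) (by omega : n < n + 1) h'
          rw [if_neg (by omega)]
          push_cast
          omega
        · have := h.lt (n + 1) (by omega)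
          have := endpointRank_mono L R (n + 1) (by omega : L (n + 1) ≤ L n)
          rw [if_pos (by omega)]
          push_cast
          omega

lemma card_Icc_filter_Ioc {n a b : ℕ} (hab : a ≤ b) (hb : b ≤ 2 * n) :
    ((Finset.Icc (-(n : ℤ)) n).filter fun x => (a : ℤ) < x + n ∧ x + n ≤ b).card = b - a := by
  have : (Finset.Icc (-(n : ℤ)) n).filter (fun x => (a : ℤ) < x + n ∧ x + n ≤ b) =
      Finset.Ioc ((a : ℤ) - n) (b - n) := by
    ext x
    simp only [Finset.mem_filter, Finset.mem_Icc, Finset.mem_Ioc]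
    omega
  rw [this, Int.card_Ioc]
  omega

namespace ChordLabeling

variable {n : ℕ} {P : DyckPath n} (C : ChordLabeling P)

lemma l_lt_l_or_r_lt_l {i k : Fin n} (hik : i < k) : C.l i < C.l k ∨ C.r k < C.l i := by
  obtain ⟨hi, hi2, ⟨_, hiup⟩, -, hieq, higt⟩ := C.chord i
  obtain ⟨hk, hk2, -, ⟨_, hkdown⟩, hkeq, hkgt⟩ := C.chord k
  by_contra! hcon
  have hne : C.l i ≠ C.l k := fun h => hik.ne (C.inj h)
  have hne' : C.l i ≠ C.r k := by
    intro h
    simp only [h, hkdown] at hiup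
    exact Bool.false_ne_true hiup
  have h₁ := hkgt (C.l i) (by omega) (by omega)
  rcases lt_trichotomy (C.r i) (C.r k) with h | h | h
  · exact absurd (C.natural i k (by omega) h) (by omega)
  · rw [h] at hieq
    omega
  · have := higt (C.r k + 1) (by omega) (by omega)
    omega

lemma r_lt_l_or_r_lt_r {i k : Fin n} (hik : i < k) : C.r i < C.l k ∨ C.r k < C.r i := by
  obtain ⟨hi, hi2, -, ⟨_, hidown⟩, hieq, higt⟩ := C.chord i
  obtain ⟨hk, hk2, ⟨_, hkup⟩, -, hkeq, hkgt⟩ := C.chord k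
  by_contra! hcon
  have hne : C.l k ≠ C.r i := by
    intro h
    simp only [h, hidown] at hkup
    exact Bool.false_ne_true hkup
  have hl : C.l i < C.l k := by
    rcases C.l_lt_l_or_r_lt_l hik with h | h <;> omega
  have h₁ := higt (C.l k) hl (by omega)
  rcases hcon.2.eq_or_lt with h | h
  · rw [h] at hieq
    omega
  · have := hkgt (C.r i + 1) (by omega) (by omega)
    omega

/-- Left endpoints as a function on the natural numbers. -/
def leftEnd (i : ℕ) : ℕ := if h : i < n then C.l ⟨i, h⟩ else 0

/-- Right endpoints as a function on the natural numbers. -/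
def rightEnd (i : ℕ) : ℕ := if h : i < n then C.r ⟨i, h⟩ else 0

lemma leftEnd_coe (i : Fin n) : C.leftEnd i = C.l i := by simp [leftEnd]

lemma rightEnd_coe (i : Fin n) : C.rightEnd i = C.r i := by simp [rightEnd]

lemma intervalSeq : IntervalSeq n C.leftEnd C.rightEnd where
  lt i hi := by simpa [leftEnd, rightEnd, hi] using (C.chord ⟨i, hi⟩).1
  left i k hik hk := by
    simpa [leftEnd, rightEnd, hk, hik.trans hk] using
      C.l_lt_l_or_r_lt_l (i := ⟨i, hik.trans hk⟩) (k := ⟨k, hk⟩) hik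
  right i k hik hk := by
    simpa [leftEnd, rightEnd, hk, hik.trans hk] using
      C.r_lt_l_or_r_lt_r (i := ⟨i, hik.trans hk⟩) (k := ⟨k, hk⟩) hik

lemma rightEnd_lt {i : ℕ} (hi : i < n) : C.rightEnd i < 2 * n := by
  simpa [rightEnd, hi] using (C.chord ⟨i, hi⟩).2.1

lemma seqOf_eq (i : Fin n) :
    seqOf C i = endpointRank C.leftEnd C.rightEnd i (C.leftEnd i) := by
  have hcard (f : Fin n → ℕ) (g : ℕ → ℕ) (hfg : ∀ j : Fin n, g j = f j) (m : ℕ) :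
      (Finset.univ.filter fun j : Fin n => j < i ∧ f j < m).card =
        ((Finset.range i).filter fun j => g j < m).card := by
    rw [← Finset.card_map Fin.valEmbedding]
    congr 1
    ext j
    simp only [Finset.mem_map, Finset.mem_filter, Finset.mem_univ, true_and,
      Fin.valEmbedding_apply, Finset.mem_range]
    constructor
    · rintro ⟨j, hj, rfl⟩
      rw [hfg]
      exact hj
    · rintro ⟨hj, hlt⟩
      exact ⟨⟨j, hj.trans i.2⟩, ⟨hj, by rw [← hfg]; exact hlt⟩, rfl⟩
  unfold seqOf endpointRank
  rw [C.leftEnd_coe, hcard _ _ C.leftEnd_coe, hcard _ _ C.rightEnd_coe]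

lemma nextIdx_coe {i : Fin n} (hi : (i : ℕ) + 1 < n) : (nextIdx i : ℕ) = i + 1 := by
  simp [nextIdx, Nat.mod_eq_of_lt hi]

/-- Sums over the descents of the word of left endpoints. -/
lemma sum_descentFinset (f : Fin n → ℤ) (g : ℕ → ℤ)
    (hfg : ∀ i : Fin n, (i : ℕ) + 1 < n → g i = f i) :
    ∑ i ∈ descentFinset C.l, f i =
      ∑ i ∈ Finset.range (n - 1), if C.leftEnd (i + 1) < C.leftEnd i then g i else 0 := by
  rw [← Finset.sum_filter]
  refine Finset.sum_bij (fun i _ => (i : ℕ)) ?_ (fun i _ j _ h => Fin.ext h) ?_ ?_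
  · intro i hi
    simp only [descentFinset, Finset.mem_filter, Finset.mem_univ, true_and] at hi
    rw [← C.leftEnd_coe, ← C.leftEnd_coe, nextIdx_coe hi.1] at hi
    simp only [Finset.mem_filter, Finset.mem_range]
    omega
  · intro i hi
    simp only [Finset.mem_filter, Finset.mem_range] at hi
    have hi' : i + 1 < n := by omega
    refine ⟨⟨i, by omega⟩, ?_, rfl⟩
    simp only [descentFinset, Finset.mem_filter, Finset.mem_univ, true_and]
    rw [← C.leftEnd_coe, ← C.leftEnd_coe, nextIdx_coe hi']
    exact ⟨hi', hi.2⟩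
  · intro i hi
    simp only [descentFinset, Finset.mem_filter, Finset.mem_univ, true_and] at hi
    exact (hfg i hi.1).symm

lemma card_filter_later (i : ℕ) (a b : ℕ) :
    (Finset.univ.filter fun j : Fin n => i + 1 < (j : ℕ) ∧ a < C.l j ∧ C.l j < b).card =
      ((Finset.Ico (i + 2) n).filter fun j => a < C.leftEnd j ∧ C.leftEnd j < b).card := by
  rw [← Finset.card_map Fin.valEmbedding]
  congr 1
  ext j
  simp only [Finset.mem_map, Finset.mem_filter, Finset.mem_univ, true_and,
    Fin.valEmbedding_apply, Finset.mem_Ico]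
  constructor
  · rintro ⟨j, hj, rfl⟩
    rw [C.leftEnd_coe]
    exact ⟨⟨hj.1, j.2⟩, hj.2⟩
  · rintro ⟨⟨hj, hjn⟩, hlt⟩
    exact ⟨⟨j, hjn⟩, ⟨hj, by rw [← C.leftEnd_coe]; exact hlt⟩, rfl⟩

end ChordLabeling

/-- For `T = DTR(λ, σ)` with `ℓ_i, r_i` the endpoint positions of the
chord labeled `i`:
`area(T) = Σ_{i ∈ DES(ℓ)} (ℓ_i − r_{i+1})` and
`tiles(T) = Σ_{i ∈ DES(ℓ)} (ℓ_i − r_{i+1} − 2·#{j > i+1 : r_{i+1} < ℓ_j < ℓ_i})`. -/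
theorem area_tiles_DTR_formulas (n : ℕ) (lam : DyckPath n) (C : ChordLabeling lam)
    (σ : Equiv.Perm (Fin n)) (hσ : IsStandardization C.l σ)
    (T : DyckTiling n) (hT : IsDTR n (seqOf C) T) :
    (T.area : ℤ) = ∑ i ∈ descentFinset C.l, ((C.l i : ℤ) - (C.r (nextIdx i) : ℤ)) ∧
    (T.numTiles : ℤ) = ∑ i ∈ descentFinset C.l,
      ((C.l i : ℤ) - (C.r (nextIdx i) : ℤ) -
        2 * ((Finset.univ.filter fun j : Fin n =>
          (i : ℕ) + 1 < (j : ℕ) ∧ C.r (nextIdx i) < C.l j ∧ C.l j < C.l i).card : ℤ)) := by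
  have hseq := C.intervalSeq
  have hR : ∀ i < n, C.rightEnd i < 2 * n := fun i hi => C.rightEnd_lt hi
  obtain ⟨hht, htiles, -⟩ := hT.shape hseq le_rfl C.seqOf_eq
  constructor
  · rw [DyckTiling.area, card_skewCells _ _ _ hht,
      C.sum_descentFinset _ (fun i => (C.leftEnd i : ℤ) - C.rightEnd (i + 1))]
    · simp only [ribbonCount]
      rw [Finset.sum_comm]
      push_cast
      refine Finset.sum_congr rfl fun i hi => ?_
      rw [Finset.mem_range] at hi
      split_ifs with hdes
      · have hRL : C.rightEnd (i + 1) < C.leftEnd i := by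
          rcases hseq.left i (i + 1) (by omega) (by omega) with h | h <;> omega
        have hL := hseq.lt i (by omega)
        have hRn := hR i (by omega)
        rw [hseq.endpointRank_eq hR (by omega), hseq.endpointRank_eq hR (by omega)]
        simp only [hdes, true_and]
        rw [Finset.sum_boole, card_Icc_filter_Ioc hRL.le (by omega), Nat.cast_sub hRL.le]
      · simp [hdes]
    · intro i hi
      rw [C.leftEnd_coe, ← ChordLabeling.nextIdx_coe hi, C.rightEnd_coe]
  · rw [DyckTiling.numTiles, htiles,
      C.sum_descentFinset _ (fun i => (C.leftEnd i : ℤ) - C.rightEnd (i + 1) -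
        2 * ((Finset.Ico (i + 2) n).filter fun j =>
          C.rightEnd (i + 1) < C.leftEnd j ∧ C.leftEnd j < C.leftEnd i).card)]
    · refine Finset.sum_congr rfl fun i hi => ?_
      rw [Finset.mem_range] at hi
      split_ifs with hdes
      · exact hseq.ribbon_length hR (by omega) hdes
      · rfl
    · intro i hi
      rw [C.card_filter_later, C.leftEnd_coe, ← ChordLabeling.nextIdx_coe hi, C.rightEnd_coe]

end
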